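/- Let E be a real inner product space, Π ⊆ E a nonempty convex set, w > 0, and g, ĝ ∈ E. Let R, R' : E → ℝ be differentiable with gradients ∇R, ∇R', and assume R' is α-strongly convex on E with α > 0. Let π̂, π₊, π̂₊ ∈ Π satisfy: (i) ⟪w·ĝ + ∇R(π₊) − ∇R(π̂), π₊ − π⟫ ≤ 0 for all π ∈ Π (prediction-step optimality), and (ii) ⟪w·(g − ĝ) + ∇R'(π̂₊) − ∇R'(π₊), π̂₊ − π⟫ ≤ 0 for all π ∈ Π (correction-step optimality). Then for every π ∈ Π: w·⟪g, π₊ − π⟫ ≤ B_R(π‖π̂) − B_R(π‖π₊) − B_R(π₊‖π̂) + B_{R'}(π‖π₊) − B_{R'}(π‖π̂₊) + (w²/(2α))·‖g − ĝ‖². -/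

import Mathlib

open scoped RealInnerProductSpace

/-- Bregman divergence `B_R(z‖x) = R z − R x − ⟪∇R x, z − x⟫` generated by `R`
with gradient field `gradR`. -/
noncomputable def breg {E : Type*} [NormedAddCommGroup E] [InnerProductSpace ℝ E]
    (R : E → ℝ) (gradR : E → E) (z x : E) : ℝ :=
  R z - R x - ⟪gradR x, z - x⟫

/-- `F` is `α`-strongly convex on the set `K`. -/
def StrongConvexOnSet {E : Type*} [NormedAddCommGroup E] [NormedSpace ℝ E]
    (K : Set E) (α : ℝ) (F : E → ℝ) : Prop :=
  ∀ ⦃x⦄, x ∈ K → ∀ ⦃y⦄, y ∈ K → ∀ ⦃t : ℝ⦄, 0 ≤ t → t ≤ 1 →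
    F (t • x + (1 - t) • y) ≤ t * F x + (1 - t) * F y - α / 2 * t * (1 - t) * ‖x - y‖ ^ 2

/-- First-order characterization of strong convexity: the Bregman divergence dominates
the squared distance. -/
theorem StrongConvexOnSet.le_breg {E : Type*} [NormedAddCommGroup E] [InnerProductSpace ℝ E]
    {K : Set E} {α : ℝ} {F : E → ℝ} {gradF : E → E} (hF : StrongConvexOnSet K α F) {x y : E}
    (hx : x ∈ K) (hy : y ∈ K) (hgrad : HasFDerivAt F (innerSL ℝ (gradF x)) x) :
    α / 2 * ‖y - x‖ ^ 2 ≤ breg F gradF y x := by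
  have hslope := (hgrad.hasLineDerivAt (y - x)).tendsto_slope_zero_right
  have hbound : Filter.Tendsto (fun t : ℝ => F y - F x - α / 2 * (1 - t) * ‖y - x‖ ^ 2)
      (nhdsWithin 0 (Set.Ioi 0)) (nhds (F y - F x - α / 2 * (1 - 0) * ‖y - x‖ ^ 2)) :=
    (Continuous.tendsto (by fun_prop) 0).mono_left nhdsWithin_le_nhds
  have hle := le_of_tendsto_of_tendsto hslope hbound (by
    filter_upwards [Ioc_mem_nhdsGT (zero_lt_one (α := ℝ))] with t ht
    have h := hF hy hx ht.1.le ht.2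
    rw [show t • y + (1 - t) • x = x + t • (y - x) by module] at h
    rw [smul_eq_mul, inv_mul_le_iff₀ ht.1]
    linarith)
  simp only [innerSL_apply_apply] at hle
  unfold breg
  linarith

/-- The three-point identity for Bregman divergences. -/
theorem breg_sub_breg_sub_breg {E : Type*} [NormedAddCommGroup E] [InnerProductSpace ℝ E]
    (R : E → ℝ) (gradR : E → E) (z p x : E) :
    breg R gradR z x - breg R gradR z p - breg R gradR p x = -⟪gradR p - gradR x, p - z⟫ := by
  simp only [breg, inner_sub_left, inner_sub_right]
  ring

/-- Young's inequality for the inner product, with weights `w` and `α`. -/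
theorem mul_inner_le_norm_sq_add_norm_sq {E : Type*} [NormedAddCommGroup E]
    [InnerProductSpace ℝ E] {α : ℝ} (hα : 0 < α) (w : ℝ) (u v : E) :
    w * ⟪u, v⟫ ≤ w ^ 2 / (2 * α) * ‖u‖ ^ 2 + α / 2 * ‖v‖ ^ 2 := by
  have h : 0 ≤ ‖w • u - α • v‖ ^ 2 / (2 * α) := by positivity
  rw [norm_sub_sq_real, norm_smul, norm_smul, mul_pow, mul_pow, Real.norm_eq_abs,
    Real.norm_eq_abs, sq_abs, sq_abs, real_inner_smul_left, real_inner_smul_right] at h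
  field_simp at h ⊢
  linarith

/-- One-step inequality of the PicCoLO Prediction–Correction scheme with a
mirror-descent base algorithm.  Here `πh` is `π̂`, `πp` is `π₊` (the
Prediction-Step output), and `πhp` is `π̂₊` (the Correction-Step output). -/
theorem piccolo_one_step_inequality
    {E : Type*} [NormedAddCommGroup E] [InnerProductSpace ℝ E]
    (Pset : Set E) (hne : Pset.Nonempty) (hconv : Convex ℝ Pset)
    (w : ℝ) (hw : 0 < w) (g ghat : E)
    (R R' : E → ℝ) (gradR gradR' : E → E)
    (hR : ∀ p : E, HasFDerivAt R (innerSL ℝ (gradR p)) p)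
    (hR' : ∀ p : E, HasFDerivAt R' (innerSL ℝ (gradR' p)) p)
    (α : ℝ) (hα : 0 < α) (hsc : StrongConvexOnSet (Set.univ : Set E) α R')
    (πh πp πhp : E) (hπh : πh ∈ Pset) (hπp : πp ∈ Pset) (hπhp : πhp ∈ Pset)
    (hpred : ∀ π ∈ Pset, ⟪w • ghat + gradR πp - gradR πh, πp - π⟫ ≤ 0)
    (hcorr : ∀ π ∈ Pset, ⟪w • (g - ghat) + gradR' πhp - gradR' πp, πhp - π⟫ ≤ 0) :
    ∀ π ∈ Pset,
      w * ⟪g, πp - π⟫ ≤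
        breg R gradR π πh - breg R gradR π πp - breg R gradR πp πh
          + breg R' gradR' π πp - breg R' gradR' π πhp
          + w ^ 2 / (2 * α) * ‖g - ghat‖ ^ 2 := by
  intro π hπ
  have hpredπ := hpred π hπ
  have hcorrπ := hcorr π hπ
  have hthreeR := breg_sub_breg_sub_breg R gradR π πp πh
  have hthreeR' := breg_sub_breg_sub_breg R' gradR' π πhp πp
  have hstrong := hsc.le_breg (Set.mem_univ πp) (Set.mem_univ πhp) (hR' πp)
  have hyoung := mul_inner_le_norm_sq_add_norm_sq hα w (g - ghat) (πp - πhp)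
  rw [norm_sub_rev πp πhp] at hyoung
  rw [add_sub_assoc, inner_add_left, real_inner_smul_left] at hpredπ hcorrπ
  have hsplit : w * ⟪g, πp - π⟫ = w * ⟪ghat, πp - π⟫ + w * ⟪g - ghat, πhp - π⟫
      + w * ⟪g - ghat, πp - πhp⟫ := by
    simp only [inner_sub_left, inner_sub_right]
    ring
  linarith
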